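/- Let H ∈ (0,1) and let W^H be the law of fractional Brownian motion with Hurst parameter H. Then for W^H-almost every ω̄ ∈ Ω, the local order of W^H at ω̄ (for the uniform norm) exists and equals 1/H. -/

import Mathlib

open scoped ENNReal NNReal Topology
open Filter MeasureTheory Metric Set

noncomputable section

namespace Multifractal


/-- The `δ`-level Hausdorff pre-measure `H^h_δ` associated to a gauge `h`. -/
def hMeasAux {X : Type*} [MetricSpace X] (h : ℝ → ℝ) (δ : ℝ≥0∞) (E : Set X) : ℝ≥0∞ :=
  ⨅ (c : ℕ → X) (r : ℕ → ℝ) (_ : ∀ n, 0 < r n ∧ ENNReal.ofReal (r n) ≤ δ)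
    (_ : E ⊆ ⋃ n, Metric.ball (c n) (r n)), ∑' n, ENNReal.ofReal (h (r n))

/-- The `h`-Hausdorff measure. -/
def hMeas {X : Type*} [MetricSpace X] (h : ℝ → ℝ) (E : Set X) : ℝ≥0∞ :=
  ⨆ (δ : ℝ≥0∞) (_ : 0 < δ), hMeasAux h δ E

/-- `Ω`: continuous paths on `[0,1]` vanishing at `0`, with the uniform metric. -/
abbrev PathSpace : Type := {f : C(unitInterval, ℝ) // f 0 = 0}

instance : MeasurableSpace PathSpace := borel PathSpace
instance : BorelSpace PathSpace := ⟨rfl⟩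

/-- `μ` is a centered Gaussian process measure on path space with covariance `K`:
a probability measure under which every finite linear combination of coordinates
is a centered real Gaussian with the variance given by `K`. -/
def IsGaussianProcess (μ : Measure PathSpace) (K : unitInterval → unitInterval → ℝ) : Prop :=
  IsProbabilityMeasure μ ∧
  ∀ (n : ℕ) (t : Fin n → unitInterval) (c : Fin n → ℝ),
    Measure.map (fun ω : PathSpace => ∑ i, c i * ω.1 (t i)) μ =
      ProbabilityTheory.gaussianReal 0
        (Real.toNNReal (∑ i, ∑ j, c i * c j * K (t i) (t j)))

/-- `W` is the Wiener measure: the coordinate process is centered Gaussian with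
covariance `min s t`. -/
def IsWienerMeasure (W : Measure PathSpace) : Prop :=
  IsGaussianProcess W (fun s t => min (s : ℝ) (t : ℝ))

/-- `μ` is the law of fractional Brownian motion with Hurst parameter `H`. -/
def IsFBM (H : ℝ) (μ : Measure PathSpace) : Prop :=
  IsGaussianProcess μ (fun s t =>
    ((s : ℝ) ^ (2*H) + (t : ℝ) ^ (2*H) - |(t : ℝ) - (s : ℝ)| ^ (2*H)) / 2)

/-- Clamping of a real number into the unit interval. -/
def clampI (t : ℝ) : unitInterval :=
  ⟨min (max t 0) 1, Set.mem_Icc.mpr ⟨le_min (le_max_right _ _) zero_le_one, min_le_right _ _⟩⟩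

/-- The grid point `j/n` of the unit interval. -/
def gridPt (n j : ℕ) : unitInterval := clampI ((j : ℝ) / n)

/-- The discrete quadratic variation `Q_n(ω)`. -/
def Qvar (ω : PathSpace) (n : ℕ) : ℝ :=
  Real.sqrt ((1 / (n : ℝ)) *
    ∑ i ∈ Finset.range n, (ω.1 (gridPt n (i+1)) - ω.1 (gridPt n i)) ^ 2)

/-- Lower Orey exponent `q^-(ω)`. -/
def oreyLower (ω : PathSpace) : EReal :=
  liminf (fun n : ℕ => ((-Real.log (Qvar ω n) / Real.log n : ℝ) : EReal)) atTop

/-- Upper Orey exponent `q^+(ω)`. -/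
def oreyUpper (ω : PathSpace) : EReal :=
  limsup (fun n : ℕ => ((-Real.log (Qvar ω n) / Real.log n : ℝ) : EReal)) atTop

/-- The set `C_a` of `a`-Hölder paths. -/
def holderSet (a : ℝ) : Set PathSpace :=
  {ω | ∃ C : ℝ, ∀ x y : unitInterval, |ω.1 x - ω.1 y| ≤ C * |(x : ℝ) - (y : ℝ)| ^ a}

/-- The set `C_a^- = ⋂_{0<b<a} C_b` of nearly `a`-Hölder paths. -/
def holderMinus (a : ℝ) : Set PathSpace := ⋂ b ∈ Set.Ioo (0:ℝ) a, holderSet b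

/-- The set `C_q^crit` of critical `q`-Hölder paths: nearly `q`-Hölder paths whose
Orey exponent exists and equals `q`. -/
def holderCrit (q : ℝ) : Set PathSpace :=
  {ω | ω ∈ holderMinus q ∧ oreyLower ω = (q : EReal) ∧ oreyUpper ω = (q : EReal)}

/-- The set `Ω^crit` of critical Hölder paths. -/
def pathCrit : Set PathSpace := ⋃ q ∈ Set.Ioo (0:ℝ) 1, holderCrit q

/-- The lower local order of a measure `μ` on path space at `ω`. -/
def lowerLocOrd (μ : Measure PathSpace) (ω : PathSpace) : EReal :=
  liminf (fun ε : ℝ =>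
    ((Real.log (-Real.log ((μ (Metric.ball ω ε)).toReal)) / (-Real.log ε) : ℝ) : EReal))
    (𝓝[>] (0:ℝ))

/-- The upper local order of a measure `μ` on path space at `ω`. -/
def upperLocOrd (μ : Measure PathSpace) (ω : PathSpace) : EReal :=
  limsup (fun ε : ℝ =>
    ((Real.log (-Real.log ((μ (Metric.ball ω ε)).toReal)) / (-Real.log ε) : ℝ) : EReal))
    (𝓝[>] (0:ℝ))

/-- The Hausdorff order of a set of paths: `sup {α > 0 : H^{h_α}(A) = ∞}` where
`h_α(ε) = exp(-ε^{-α})`. -/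
def ordH (A : Set PathSpace) : ℝ≥0∞ :=
  ⨆ (α : ℝ) (_ : 0 < α ∧ hMeas (fun ε : ℝ => Real.exp (-(ε ^ (-α)))) A = ∞),
    ENNReal.ofReal α

/-- The level set `E(ξ)` of paths at which the local order of `μ` exists and
equals `ξ`. -/
def levelOrd (μ : Measure PathSpace) (ξ : ℝ) : Set PathSpace :=
  {ω | lowerLocOrd μ ω = (ξ : EReal) ∧ upperLocOrd μ ω = (ξ : EReal)}

/-- The cylinder `C_n(ω̄, ε)` around `ω̄` of depth `n` and radius `ε`. -/
def cylinder (ωb : PathSpace) (n : ℕ) (ε : ℝ) : Set PathSpace :=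
  {ω | ∀ j ∈ Finset.Icc 1 n, |ω.1 (gridPt n j) - ωb.1 (gridPt n j)| ≤ ε}

/-- The affine interpolation `L̄_j` of `ω̄` on `[(j-1)/n, j/n]`, evaluated at `t`. -/
def affInterp (ωb : PathSpace) (n j : ℕ) (t : ℝ) : ℝ :=
  ωb.1 (gridPt n (j-1)) +
    (t - ((j-1 : ℕ) : ℝ) / n) * n * (ωb.1 (gridPt n j) - ωb.1 (gridPt n (j-1)))

/-- The maximal deviation `Δ_n(ω̄)` of `ω̄` from its chords on the `1/n`-grid. -/
def chordDev (ωb : PathSpace) (n : ℕ) : ℝ :=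
  sSup {d : ℝ | ∃ j ∈ Finset.Icc 1 n, ∃ t ∈ Set.Icc (((j-1 : ℕ) : ℝ) / n) ((j : ℝ) / n),
    d = |ωb.1 (clampI t) - affInterp ωb n j t|}

/-!
Let `a = 2 * H`. Two estimates on small balls give the two inequalities between the local orders
and `1 / H`.

*Upper bound on the mass.* A ball of radius `ε` lies in the cylinder of paths that are `ε`-close to
its centre on the `1 / N`-grid. Given the earlier grid values, the next one is Gaussian with
variance at least `c * N ^ (-a)`, so it hits a given interval of length `2 * ε` with probability at
most `ε * N ^ H / √c`. With `N` of order `ε ^ (-1 / H)` the cylinder has mass at most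
`exp (-C * ε ^ (-1 / H))`. The lower bound on the conditional variance is spectral: `|x| ^ a` is a
multiple of `∫₀^∞ (1 - cos (x l)) l ^ (-1 - a) dl`, so the variance of `∑ u_j ω(t_j)` is a
weighted integral of `|∑ u_j (exp (i t_j l) - 1)| ^ 2`. Pairing that sum with the Fourier
transform of a tent function centred at `t_i` that vanishes at `0` and at the other times leaves
only `u_i`, and the Cauchy–Schwarz inequality bounds `u_i ^ 2` by the variance.

*Lower bound on the mass.* For `α < H`, Gaussian tails and the Borel–Cantelli lemma show that
almost every path has increments at most `2 ^ (-α * n)` over all dyadic intervals of large level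
`n`. Round such a path to multiples of `2 ^ (-α * n)` on the level-`n` grid: each of the `2 ^ n`
rounded increments is `-1`, `0` or `1`, and paths with equal codes are `D * 2 ^ (-α * n)`-close. As
there are only `3 ^ 2 ^ n` codes, the paths whose ball of this radius has mass below
`2 ^ (-n) * 3 ^ (-2 ^ n)` have total mass at most `2 ^ (-n)`, and Borel–Cantelli applies again.
This gives `exp (-C * ε ^ (-1 / α))` as a lower bound for the mass of small balls, for every
`α < H`.
-/

/-! ### Spectral representation of the fractional covariance -/

/-- The integrand `(1 - cos (x l)) l ^ (-1 - a)`, whose integral over `l > 0` is a multiple of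
`|x| ^ a`. -/
def cosKernel (a x l : ℝ) : ℝ := (1 - Real.cos (x * l)) * l ^ (-1 - a)

/-- The factor `∫₀^∞ (1 - cos l) l ^ (-1 - a) dl` of `|x| ^ a` in its spectral representation. -/
def cosConst (a : ℝ) : ℝ := ∫ l in Ioi (0 : ℝ), cosKernel a 1 l

lemma cosKernel_nonneg (a x : ℝ) {l : ℝ} (hl : 0 < l) : 0 ≤ cosKernel a x l :=
  mul_nonneg (sub_nonneg.mpr (Real.cos_le_one _)) (Real.rpow_nonneg hl.le _)

lemma cosKernel_le_two_mul_rpow (a x : ℝ) {l : ℝ} (hl : 0 < l) :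
    cosKernel a x l ≤ 2 * l ^ (-1 - a) :=
  mul_le_mul_of_nonneg_right (by linarith [Real.neg_one_le_cos (x * l)]) (Real.rpow_nonneg hl.le _)

lemma cosKernel_le_sq_mul_rpow (a x : ℝ) {l : ℝ} (hl : 0 < l) :
    cosKernel a x l ≤ x ^ 2 / 2 * l ^ (1 - a) := by
  have hcos : 1 - Real.cos (x * l) ≤ x ^ 2 / 2 * l ^ 2 := by
    nlinarith [Real.one_sub_sq_div_two_le_cos (x := x * l)]
  have hpow : l ^ (1 - a) = l ^ 2 * l ^ (-1 - a) := by
    rw [← Real.rpow_natCast, ← Real.rpow_add hl]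
    congr 1
    push_cast
    ring
  rw [hpow, ← mul_assoc]
  exact mul_le_mul_of_nonneg_right hcos (Real.rpow_nonneg hl.le _)

lemma measurable_cosKernel (a x : ℝ) : Measurable (cosKernel a x) := by
  unfold cosKernel
  fun_prop

lemma integrableOn_cosKernel {a : ℝ} (ha : 0 < a) (ha2 : a < 2) (x : ℝ) :
    IntegrableOn (cosKernel a x) (Ioi 0) := by
  have hmeas := (measurable_cosKernel a x).aestronglyMeasurable (μ := volume)
  have near_zero : IntegrableOn (cosKernel a x) (Ioc 0 1) := by
    have hpow : IntegrableOn (fun l : ℝ => l ^ (1 - a)) (Ioc 0 1) :=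
      (intervalIntegrable_iff_integrableOn_Ioc_of_le zero_le_one).mp
        (intervalIntegral.intervalIntegrable_rpow' (by linarith))
    refine Integrable.mono' (hpow.const_mul (x ^ 2 / 2)) hmeas.restrict ?_
    filter_upwards [ae_restrict_mem measurableSet_Ioc] with l hl
    rw [Real.norm_of_nonneg (cosKernel_nonneg a x hl.1)]
    exact cosKernel_le_sq_mul_rpow a x hl.1
  have near_top : IntegrableOn (cosKernel a x) (Ioi 1) := by
    have hpow : IntegrableOn (fun l : ℝ => l ^ (-1 - a)) (Ioi 1) :=
      integrableOn_Ioi_rpow_of_lt (by linarith) one_pos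
    refine Integrable.mono' (hpow.const_mul 2) hmeas.restrict ?_
    filter_upwards [ae_restrict_mem measurableSet_Ioi] with l hl
    have hl0 : 0 < l := one_pos.trans hl
    rw [Real.norm_of_nonneg (cosKernel_nonneg a x hl0)]
    exact cosKernel_le_two_mul_rpow a x hl0
  rw [← Ioc_union_Ioi_eq_Ioi (zero_le_one : (0 : ℝ) ≤ 1)]
  exact near_zero.union near_top

lemma cosKernel_eq_abs_rpow_mul (a : ℝ) {x l : ℝ} (hx : x ≠ 0) (hl : 0 < l) :
    cosKernel a x l = |x| ^ (1 + a) * cosKernel a 1 (|x| * l) := by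
  have hx' : 0 < |x| := abs_pos.mpr hx
  have hcos : Real.cos (1 * (|x| * l)) = Real.cos (x * l) := by
    rw [one_mul, ← Real.cos_abs (x * l), abs_mul, abs_of_pos hl]
  have hpow : |x| ^ (1 + a) * |x| ^ (-1 - a) = 1 := by
    rw [← Real.rpow_add hx', show 1 + a + (-1 - a) = 0 by ring, Real.rpow_zero]
  unfold cosKernel
  rw [hcos, Real.mul_rpow hx'.le hl.le]
  linear_combination -(1 - Real.cos (x * l)) * l ^ (-1 - a) * hpow

lemma integral_cosKernel {a : ℝ} (ha : 0 < a) (x : ℝ) :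
    ∫ l in Ioi (0 : ℝ), cosKernel a x l = cosConst a * |x| ^ a := by
  rcases eq_or_ne x 0 with rfl | hx
  · simp [cosKernel, Real.zero_rpow ha.ne']
  have hx' : 0 < |x| := abs_pos.mpr hx
  have hsubst := integral_comp_mul_left_Ioi (cosKernel a 1) 0 hx'
  rw [mul_zero, smul_eq_mul] at hsubst
  rw [setIntegral_congr_fun measurableSet_Ioi fun l hl => cosKernel_eq_abs_rpow_mul a hx hl,
    integral_const_mul, hsubst, Real.rpow_add hx', Real.rpow_one, cosConst]
  field_simp

lemma cosConst_pos {a : ℝ} (ha : 0 < a) (ha2 : a < 2) : 0 < cosConst a := by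
  have hpos : ∀ l ∈ Ioo (0 : ℝ) 1, cosKernel a 1 l ≠ 0 := by
    intro l hl
    have hcos : Real.cos (1 * l) < 1 := by
      rw [one_mul, ← Real.cos_zero]
      exact Real.cos_lt_cos_of_nonneg_of_le_pi le_rfl (by linarith [Real.pi_gt_three, hl.2]) hl.1
    exact (mul_pos (sub_pos.mpr hcos) (Real.rpow_pos_of_pos hl.1 _)).ne'
  have hnonneg : 0 ≤ᵐ[volume.restrict (Ioi 0)] cosKernel a 1 := by
    filter_upwards [ae_restrict_mem measurableSet_Ioi] with l hl using cosKernel_nonneg a 1 hl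
  rw [cosConst,
    setIntegral_pos_iff_support_of_nonneg_ae hnonneg (integrableOn_cosKernel ha ha2 1)]
  exact lt_of_lt_of_le (by simp : 0 < volume (Ioo (0 : ℝ) 1))
    (measure_mono fun l hl => ⟨hpos l hl, hl.1⟩)

/-- The covariance `(|s| ^ a + |t| ^ a - |t - s| ^ a) / 2` of fractional Brownian motion with
Hurst parameter `a / 2`, indexed by the whole line. -/
def fracCov (a s t : ℝ) : ℝ := (|s| ^ a + |t| ^ a - |t - s| ^ a) / 2

/-- The integrand of the spectral representation of `fracCov a s t`. -/
def fracCovKernel (a s t l : ℝ) : ℝ :=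
  (cosKernel a s l + cosKernel a t l - cosKernel a (t - s) l) / 2

lemma integrableOn_fracCovKernel {a : ℝ} (ha : 0 < a) (ha2 : a < 2) (s t : ℝ) :
    IntegrableOn (fracCovKernel a s t) (Ioi 0) :=
  have hi := integrableOn_cosKernel ha ha2
  (((hi s).add (hi t)).sub (hi (t - s))).div_const 2

lemma integral_fracCovKernel {a : ℝ} (ha : 0 < a) (ha2 : a < 2) (s t : ℝ) :
    ∫ l in Ioi (0 : ℝ), fracCovKernel a s t l = cosConst a * fracCov a s t := by
  have hi := integrableOn_cosKernel ha ha2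
  unfold fracCovKernel fracCov
  rw [integral_div, integral_sub ((hi s).fun_add (hi t)) (hi _), integral_add (hi s) (hi t)]
  simp only [integral_cosKernel ha]
  ring

lemma cosKernel_mul_cos (a r x l : ℝ) :
    cosKernel a r l * Real.cos (x * l) =
      (cosKernel a (x + r) l + cosKernel a (x - r) l) / 2 - cosKernel a x l := by
  unfold cosKernel
  rw [add_mul x r, sub_mul x r, Real.cos_add, Real.cos_sub]
  ring

lemma integrableOn_cosKernel_mul_cos {a : ℝ} (ha : 0 < a) (ha2 : a < 2) (r x : ℝ) :
    IntegrableOn (fun l => cosKernel a r l * Real.cos (x * l)) (Ioi 0) := by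
  have hi := integrableOn_cosKernel ha ha2
  simp only [cosKernel_mul_cos]
  exact Integrable.sub (((hi _).fun_add (hi _)).div_const 2) (hi _)

lemma integral_cosKernel_mul_cos {a : ℝ} (ha : 0 < a) (ha2 : a < 2) (r x : ℝ) :
    ∫ l in Ioi (0 : ℝ), cosKernel a r l * Real.cos (x * l) =
      cosConst a * ((|x + r| ^ a + |x - r| ^ a) / 2 - |x| ^ a) := by
  have hi := integrableOn_cosKernel ha ha2
  simp only [cosKernel_mul_cos]
  rw [integral_sub (((hi _).fun_add (hi _)).div_const 2) (hi x), integral_div,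
    integral_add (hi _) (hi _)]
  simp only [integral_cosKernel ha]
  ring

lemma abs_add_abs_sub (x r : ℝ) : |x + r| + |x - r| = 2 * max |x| |r| := by
  rcases abs_cases (x + r) with h₁ | h₁ <;> rcases abs_cases (x - r) with h₂ | h₂ <;>
    rcases abs_cases x with h₃ | h₃ <;> rcases abs_cases r with h₄ | h₄ <;>
    rcases max_cases |x| |r| with h₅ | h₅ <;> linarith

-- The inverse Fourier transform of the Fejér kernel `(1 - cos (r l)) / l ^ 2` is a tent function.
lemma integral_cosKernel_one_mul_cos {r : ℝ} (hr : 0 ≤ r) (x : ℝ) :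
    ∫ l in Ioi (0 : ℝ), cosKernel 1 r l * Real.cos (x * l) = cosConst 1 * max 0 (r - |x|) := by
  rw [integral_cosKernel_mul_cos one_pos one_lt_two, Real.rpow_one, Real.rpow_one, Real.rpow_one,
    abs_add_abs_sub, mul_div_cancel_left₀ _ two_ne_zero, ← max_sub_sub_right, sub_self,
    abs_of_nonneg hr]

/-! ### Local nondeterminism of the fractional covariance -/

lemma sq_integral_le_integral_mul_integral {α : Type*} [MeasurableSpace α] {ν : Measure α}
    {f g h : α → ℝ} (hf : Integrable f ν) (hg : Integrable g ν) (hh : Integrable h ν)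
    (hg0 : ∀ᵐ x ∂ν, 0 ≤ g x) (hh0 : ∀ᵐ x ∂ν, 0 ≤ h x) (hfgh : ∀ᵐ x ∂ν, f x ^ 2 ≤ g x * h x) :
    (∫ x, f x ∂ν) ^ 2 ≤ (∫ x, g x ∂ν) * ∫ x, h x ∂ν := by
  have hquad : ∀ θ : ℝ,
      0 ≤ (∫ x, g x ∂ν) * (θ * θ) + (-2 * ∫ x, f x ∂ν) * θ + ∫ x, h x ∂ν := by
    intro θ
    have hint : 0 ≤ ∫ x, g x * (θ * θ) + -2 * f x * θ + h x ∂ν := by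
      refine integral_nonneg_of_ae ?_
      filter_upwards [hg0, hh0, hfgh] with x hgx hhx hx
      rcases hgx.eq_or_lt' with hgx | hgx
      · have hfx : f x = 0 := by nlinarith
        simpa [hgx, hfx] using hhx
      · refine nonneg_of_mul_nonneg_right (a := g x) ?_ hgx
        nlinarith [sq_nonneg (g x * θ - f x)]
    rwa [integral_add ((hg.mul_const _).fun_add ((hf.const_mul _).mul_const _)) hh,
      integral_add (hg.mul_const _) ((hf.const_mul _).mul_const _), integral_mul_const,
      integral_mul_const, integral_const_mul] at hint
  have hdiscrim := discrim_le_zero hquad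
  rw [discrim] at hdiscrim
  linarith

section QuadraticForm

variable {ι : Type*} [Fintype ι] (t u : ι → ℝ)

lemma sum_sum_fracCovKernel (a l : ℝ) :
    ∑ j, ∑ k, u j * u k * fracCovKernel a (t j) (t k) l =
      l ^ (-1 - a) / 2 * ((∑ j, u j * (1 - Real.cos (t j * l))) ^ 2 +
        (∑ j, u j * Real.sin (t j * l)) ^ 2) := by
  rw [sq, sq, Finset.sum_mul_sum, Finset.sum_mul_sum, ← Finset.sum_add_distrib, Finset.mul_sum]
  refine Finset.sum_congr rfl fun j _ => ?_
  rw [← Finset.sum_add_distrib, Finset.mul_sum]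
  refine Finset.sum_congr rfl fun k _ => ?_
  unfold fracCovKernel cosKernel
  rw [sub_mul (t k) (t j), Real.cos_sub]
  ring

lemma sum_sum_fracCovKernel_nonneg (a : ℝ) {l : ℝ} (hl : 0 < l) :
    0 ≤ ∑ j, ∑ k, u j * u k * fracCovKernel a (t j) (t k) l := by
  rw [sum_sum_fracCovKernel]
  positivity

lemma integrableOn_sum_sum_fracCovKernel {a : ℝ} (ha : 0 < a) (ha2 : a < 2) :
    IntegrableOn (fun l => ∑ j, ∑ k, u j * u k * fracCovKernel a (t j) (t k) l) (Ioi 0) :=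
  integrable_finsetSum _ fun _ _ => integrable_finsetSum _ fun _ _ =>
    (integrableOn_fracCovKernel ha ha2 _ _).const_mul _

lemma integral_sum_sum_fracCovKernel {a : ℝ} (ha : 0 < a) (ha2 : a < 2) :
    ∫ l in Ioi (0 : ℝ), ∑ j, ∑ k, u j * u k * fracCovKernel a (t j) (t k) l =
      cosConst a * ∑ j, ∑ k, u j * u k * fracCov a (t j) (t k) := by
  have hi := fun j k => (integrableOn_fracCovKernel ha ha2 (t j) (t k)).const_mul (u j * u k)
  rw [integral_finsetSum _ fun j _ => integrable_finsetSum _ fun k _ => hi j k, Finset.mul_sum]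
  refine Finset.sum_congr rfl fun j _ => ?_
  rw [integral_finsetSum _ fun k _ => hi j k, Finset.mul_sum]
  refine Finset.sum_congr rfl fun k _ => ?_
  rw [integral_const_mul, integral_fracCovKernel ha ha2, mul_left_comm]

/-- The integrand representing `∑ j, u j * (f (t j) - f 0)` for the tent function `f` of height
`r` and half-width `r` centred at `s`, up to the factor `cosConst 1`. -/
def tentSumKernel (r s l : ℝ) : ℝ :=
  ∑ j, u j * (cosKernel 1 r l * Real.cos ((t j - s) * l) - cosKernel 1 r l * Real.cos (s * l))

lemma integrableOn_tentSumKernel (r s : ℝ) : IntegrableOn (tentSumKernel t u r s) (Ioi 0) :=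
  have hi := integrableOn_cosKernel_mul_cos one_pos one_lt_two r
  integrable_finsetSum _ fun j _ => ((hi (t j - s)).sub (hi s)).const_mul (u j)

variable {t} in
lemma integral_tentSumKernel {r : ℝ} (hr : 0 ≤ r) {i : ι} (hti : r ≤ |t i|)
    (hsep : ∀ j ≠ i, r ≤ |t j - t i|) :
    ∫ l in Ioi (0 : ℝ), tentSumKernel t u r (t i) l = cosConst 1 * (r * u i) := by
  have hi := integrableOn_cosKernel_mul_cos one_pos one_lt_two r
  have hterm : ∀ j, ∫ l in Ioi (0 : ℝ), u j * (cosKernel 1 r l * Real.cos ((t j - t i) * l) -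
      cosKernel 1 r l * Real.cos (t i * l)) = cosConst 1 * (u j * max 0 (r - |t j - t i|)) := by
    intro j
    rw [integral_const_mul, integral_sub (hi _) (hi _), integral_cosKernel_one_mul_cos hr,
      integral_cosKernel_one_mul_cos hr, max_eq_left (sub_nonpos.mpr hti)]
    ring
  unfold tentSumKernel
  rw [integral_finsetSum _ fun j _ => ((hi (t j - t i)).fun_sub (hi (t i))).const_mul (u j),
    Finset.sum_congr rfl fun j _ => hterm j, ← Finset.mul_sum, Finset.sum_eq_single i]
  · rw [sub_self, abs_zero, sub_zero, max_eq_right hr, mul_comm r]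
  · intro j _ hj
    rw [max_eq_left (sub_nonpos.mpr (hsep j hj)), mul_zero]
  · simp

lemma sq_tentSumKernel_le (a r s : ℝ) {l : ℝ} (hl : 0 < l) :
    tentSumKernel t u r s l ^ 2 ≤ 4 * cosKernel (2 - a) r l *
      ∑ j, ∑ k, u j * u k * fracCovKernel a (t j) (t k) l := by
  set A := ∑ j, u j * (1 - Real.cos (t j * l)) with hA
  set B := ∑ j, u j * Real.sin (t j * l) with hB
  set d := 1 - Real.cos (r * l)
  have hd_nonneg : 0 ≤ d := sub_nonneg.mpr (Real.cos_le_one _)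
  have hd_sq : d ^ 2 ≤ 2 * d := by nlinarith [Real.neg_one_le_cos (r * l)]
  have hkernel : tentSumKernel t u r s l = d * l ^ (-1 - 1 : ℝ) *
      (Real.sin (s * l) * B - Real.cos (s * l) * A) := by
    rw [hA, hB, Finset.mul_sum, Finset.mul_sum, ← Finset.sum_sub_distrib, Finset.mul_sum]
    refine Finset.sum_congr rfl fun j _ => ?_
    rw [sub_mul (t j) s, Real.cos_sub, cosKernel]
    ring
  have hrot : (Real.sin (s * l) * B - Real.cos (s * l) * A) ^ 2 ≤ A ^ 2 + B ^ 2 := by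
    have hsum : A ^ 2 + B ^ 2 - (Real.sin (s * l) * B - Real.cos (s * l) * A) ^ 2 =
        (Real.cos (s * l) * B + Real.sin (s * l) * A) ^ 2 := by
      linear_combination (-(A ^ 2) - B ^ 2) * Real.sin_sq_add_cos_sq (s * l)
    exact sub_nonneg.mp (hsum ▸ sq_nonneg _)
  have hpow : (l ^ (-1 - 1 : ℝ)) ^ 2 = l ^ (-1 - (2 - a)) * l ^ (-1 - a) := by
    rw [sq, ← Real.rpow_add hl, ← Real.rpow_add hl]
    congr 1
    ring
  rw [hkernel, sum_sum_fracCovKernel, cosKernel]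
  calc (d * l ^ (-1 - 1 : ℝ) * (Real.sin (s * l) * B - Real.cos (s * l) * A)) ^ 2
      = d ^ 2 * (l ^ (-1 - (2 - a)) * l ^ (-1 - a)) *
          (Real.sin (s * l) * B - Real.cos (s * l) * A) ^ 2 := by rw [mul_pow, mul_pow, hpow]
    _ ≤ 2 * d * (l ^ (-1 - (2 - a)) * l ^ (-1 - a)) * (A ^ 2 + B ^ 2) := by
        have hpow_nonneg : 0 ≤ l ^ (-1 - (2 - a)) * l ^ (-1 - a) := by positivity
        exact mul_le_mul (mul_le_mul_of_nonneg_right hd_sq hpow_nonneg) hrot (sq_nonneg _)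
          (mul_nonneg (mul_nonneg two_pos.le hd_nonneg) hpow_nonneg)
    _ = 4 * (d * l ^ (-1 - (2 - a))) * (l ^ (-1 - a) / 2 * (A ^ 2 + B ^ 2)) := by ring

-- Pairing `∑ j, u j * B (t j)` with a tent centred at `t i` that vanishes at `0` and at all
-- other times isolates `u i`; Cauchy–Schwarz is then applied on the spectral side.
variable {t} in
lemma sq_cosConst_mul_le_sum_sum_fracCov {a : ℝ} (ha : 0 < a) (ha2 : a < 2) {r : ℝ} (hr : 0 ≤ r)
    {i : ι} (hti : r ≤ |t i|) (hsep : ∀ j ≠ i, r ≤ |t j - t i|) :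
    (cosConst 1 * (r * u i)) ^ 2 ≤ 4 * (cosConst (2 - a) * r ^ (2 - a)) *
      (cosConst a * ∑ j, ∑ k, u j * u k * fracCov a (t j) (t k)) := by
  have ha' : 0 < 2 - a := by linarith
  have hdual : ∫ l in Ioi (0 : ℝ), 4 * cosKernel (2 - a) r l =
      4 * (cosConst (2 - a) * r ^ (2 - a)) := by
    rw [integral_const_mul, integral_cosKernel ha', abs_of_nonneg hr]
  rw [← integral_tentSumKernel u hr hti hsep, ← integral_sum_sum_fracCovKernel t u ha ha2, ← hdual]
  refine sq_integral_le_integral_mul_integral (integrableOn_tentSumKernel t u r (t i))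
    ((integrableOn_cosKernel ha' (by linarith) r).const_mul 4)
    (integrableOn_sum_sum_fracCovKernel t u ha ha2) ?_ ?_ ?_ <;>
    filter_upwards [ae_restrict_mem measurableSet_Ioi] with l hl
  · exact mul_nonneg four_pos.le (cosKernel_nonneg _ _ hl)
  · exact sum_sum_fracCovKernel_nonneg t u a hl
  · exact sq_tentSumKernel_le t u a r (t i) hl

variable {t} in
lemma mul_rpow_mul_sq_le_sum_sum_fracCov {a : ℝ} (ha : 0 < a) (ha2 : a < 2) {r : ℝ} (hr : 0 < r)
    {i : ι} (hti : r ≤ |t i|) (hsep : ∀ j ≠ i, r ≤ |t j - t i|) :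
    cosConst 1 ^ 2 / (4 * cosConst (2 - a) * cosConst a) * r ^ a * u i ^ 2 ≤
      ∑ j, ∑ k, u j * u k * fracCov a (t j) (t k) := by
  have hC := cosConst_pos ha ha2
  have hC' : 0 < cosConst (2 - a) := cosConst_pos (by linarith) (by linarith)
  have hpow : r ^ (2 - a) * r ^ a = r ^ 2 := by
    rw [← Real.rpow_add hr, sub_add_cancel, Real.rpow_two]
  have hle := sq_cosConst_mul_le_sum_sum_fracCov u ha ha2 hr.le hti hsep
  refine le_of_mul_le_mul_left (a := 4 * (cosConst (2 - a) * r ^ (2 - a)) * cosConst a) ?_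
    (by positivity)
  calc _ = cosConst 1 ^ 2 * (r ^ (2 - a) * r ^ a) * u i ^ 2 := by field_simp
    _ = (cosConst 1 * (r * u i)) ^ 2 := by rw [hpow]; ring
    _ ≤ _ := by rwa [mul_assoc]

end QuadraticForm

/-! ### Gaussian vectors -/

section GaussianVectors

open ProbabilityTheory

lemma gaussianPDFReal_le_of_sq_le {v : ℝ≥0} {s : ℝ} (hs : 0 < s) (hv : s ^ 2 ≤ v) (m x : ℝ) :
    gaussianPDFReal m v x ≤ (2 * s)⁻¹ := by
  have hsqrt : 2 * s ≤ √(2 * Real.pi * v) :=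
    Real.le_sqrt_of_sq_le (by nlinarith [Real.pi_gt_three])
  have hexp : Real.exp (-(x - m) ^ 2 / (2 * v)) ≤ 1 :=
    Real.exp_le_one_iff.mpr (div_nonpos_of_nonpos_of_nonneg (by simp [sq_nonneg]) (by positivity))
  calc gaussianPDFReal m v x ≤ (√(2 * Real.pi * v))⁻¹ * 1 :=
        mul_le_mul_of_nonneg_left hexp (by positivity)
    _ ≤ (2 * s)⁻¹ := by
        rw [mul_one]
        exact inv_anti₀ (by positivity) hsqrt

lemma gaussianReal_closedBall_le {v : ℝ≥0} {s : ℝ} (hs : 0 < s) (hv : s ^ 2 ≤ v) (m y ε : ℝ) :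
    gaussianReal m v (closedBall y ε) ≤ ENNReal.ofReal (ε / s) := by
  have hv0 : v ≠ 0 := by
    rintro rfl
    exact (pow_pos hs 2).not_ge hv
  rw [gaussianReal_apply _ hv0]
  calc ∫⁻ x in closedBall y ε, gaussianPDF m v x
      ≤ ∫⁻ _ in closedBall y ε, ENNReal.ofReal (2 * s)⁻¹ :=
        lintegral_mono fun x => ENNReal.ofReal_le_ofReal (gaussianPDFReal_le_of_sq_le hs hv m x)
    _ = ENNReal.ofReal (ε / s) := by
        rw [setLIntegral_const, Real.volume_closedBall, ← ENNReal.ofReal_mul (by positivity)]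
        congr 1
        field_simp

lemma gaussianReal_setOf_lt_abs_le {v V : ℝ≥0} (hv : v ≤ V) {x : ℝ} (hx : 0 ≤ x) :
    gaussianReal 0 v {y | x < |y|} ≤ ENNReal.ofReal (2 * Real.exp (-x ^ 2 / (2 * V))) := by
  have hsub : HasSubgaussianMGF id V (gaussianReal 0 v) := by
    refine ⟨integrable_exp_mul_gaussianReal, fun t => ?_⟩
    simp only [mgf_id_gaussianReal, zero_mul, zero_add]
    gcongr
  have hcover : {y : ℝ | x < |y|} ⊆ {y | x ≤ id y} ∪ {y | x ≤ (-id) y} := fun y hy =>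
    (lt_abs.mp (mem_ofPred_eq ▸ hy)).imp le_of_lt le_of_lt
  calc gaussianReal 0 v {y | x < |y|}
      ≤ gaussianReal 0 v {y | x ≤ id y} + gaussianReal 0 v {y | x ≤ (-id) y} :=
        (measure_mono hcover).trans (measure_union_le _ _)
    _ ≤ ENNReal.ofReal (Real.exp (-x ^ 2 / (2 * V))) +
          ENNReal.ofReal (Real.exp (-x ^ 2 / (2 * V))) := by
        gcongr <;> rw [ENNReal.le_ofReal_iff_toReal_le (measure_ne_top _ _) (Real.exp_pos _).le]
        exacts [hsub.measure_ge_le hx, hsub.neg.measure_ge_le hx]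
    _ = ENNReal.ofReal (2 * Real.exp (-x ^ 2 / (2 * V))) := by
        rw [two_mul (Real.exp _), ENNReal.ofReal_add (Real.exp_pos _).le (Real.exp_pos _).le]

variable {Ω : Type*} [MeasurableSpace Ω] {P : Measure Ω} {ι : Type*} [Fintype ι]

lemma exists_covariance_sub_eq_zero [IsFiniteMeasure P] {V : ι → Ω → ℝ} {Y : Ω → ℝ}
    (hV : ∀ i, MemLp (V i) 2 P) (hY : MemLp Y 2 P)
    (hnd : ∀ u : ι → ℝ, Var[fun ω => ∑ j, u j * V j ω; P] = 0 → u = 0) :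
    ∃ a : ι → ℝ, ∀ i, cov[V i, fun ω => Y ω - ∑ j, a j * V j ω; P] = 0 := by
  have hsum : ∀ a : ι → ℝ, MemLp (fun ω => ∑ j, a j * V j ω) 2 P := fun a =>
    memLp_finsetSum _ fun j _ => (hV j).const_mul (a j)
  have hcov : ∀ (a : ι → ℝ) (Z : Ω → ℝ), MemLp Z 2 P →
      cov[Z, fun ω => ∑ j, a j * V j ω; P] = ∑ j, a j * cov[Z, V j; P] := by
    intro a Z hZ
    rw [covariance_fun_sum_right (fun j => (hV j).const_mul (a j)) hZ]
    simp only [covariance_const_mul_right]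
  let gram : (ι → ℝ) →ₗ[ℝ] (ι → ℝ) := Matrix.mulVecLin (Matrix.of fun i j => cov[V i, V j; P])
  have hgram : ∀ a i, gram a i = cov[V i, fun ω => ∑ j, a j * V j ω; P] := by
    intro a i
    rw [hcov a _ (hV i)]
    simp [gram, Matrix.mulVec, dotProduct, mul_comm]
  have hinj : Function.Injective gram := by
    rw [← LinearMap.ker_eq_bot, LinearMap.ker_eq_bot']
    intro u hu
    refine hnd u ?_
    rw [← covariance_self (hsum u).aemeasurable, hcov u _ (hsum u)]
    refine Finset.sum_eq_zero fun j _ => ?_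
    rw [covariance_comm, ← hgram, hu, Pi.zero_apply, mul_zero]
  obtain ⟨a, ha⟩ := LinearMap.injective_iff_surjective.mp hinj fun i => cov[V i, Y; P]
  refine ⟨a, fun i => ?_⟩
  rw [covariance_fun_sub_right (hV i) hY (hsum a), ← hgram, ha, sub_self]

lemma hasGaussianLaw_prodMk_sub_sum {V : ι → Ω → ℝ} {Y : Ω → ℝ}
    (h : HasGaussianLaw (fun ω => ((fun i => V i ω), Y ω)) P) (a : ι → ℝ) :
    HasGaussianLaw (fun ω => ((fun i => V i ω), Y ω - ∑ j, a j * V j ω)) P := by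
  let L : (ι → ℝ) × ℝ →L[ℝ] (ι → ℝ) × ℝ := (ContinuousLinearMap.fst ℝ (ι → ℝ) ℝ).prod
    (ContinuousLinearMap.snd ℝ (ι → ℝ) ℝ -
      ∑ j, a j • (ContinuousLinearMap.proj j).comp (ContinuousLinearMap.fst ℝ (ι → ℝ) ℝ))
  refine (h.map L).congr (ae_of_all _ fun ω => ?_)
  simp [L]

lemma exists_indepFun_sub_sum {V : ι → Ω → ℝ} {Y : Ω → ℝ}
    (h : HasGaussianLaw (fun ω => ((fun i => V i ω), Y ω)) P)
    (hnd : ∀ u : ι → ℝ, Var[fun ω => ∑ j, u j * V j ω; P] = 0 → u = 0) :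
    ∃ a : ι → ℝ, IndepFun (fun ω i => V i ω) (fun ω => Y ω - ∑ j, a j * V j ω) P := by
  have := h.isProbabilityMeasure
  obtain ⟨a, ha⟩ :=
    exists_covariance_sub_eq_zero (fun i => (h.fst.eval i).memLp_two) h.snd.memLp_two hnd
  have hlaw : HasGaussianLaw
      (fun ω => ((fun i => V i ω), fun _ : Unit => Y ω - ∑ j, a j * V j ω)) P :=
    (hasGaussianLaw_prodMk_sub_sum h a).map ((ContinuousLinearMap.id ℝ (ι → ℝ)).prodMap
      (ContinuousLinearMap.pi fun _ : Unit => ContinuousLinearMap.id ℝ ℝ))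
  exact ⟨a, (hlaw.indepFun_of_covariance_eval fun i _ => ha i).comp measurable_id
    (measurable_pi_apply ())⟩

lemma measure_setOf_mem_and_prodMk_mem_le {α β : Type*} [MeasurableSpace α] [MeasurableSpace β]
    [IsFiniteMeasure P] {V : Ω → α} {Z : Ω → β} (hind : IndepFun V Z P) (hV : AEMeasurable V P)
    (hZ : AEMeasurable Z P) {A : Set α} (hA : MeasurableSet A) {S : Set (α × β)}
    (hS : MeasurableSet S) {q : ℝ≥0∞} (hq : ∀ v ∈ A, P.map Z (Prod.mk v ⁻¹' S) ≤ q) :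
    P {ω | V ω ∈ A ∧ (V ω, Z ω) ∈ S} ≤ q * P (V ⁻¹' A) := by
  have hAS : MeasurableSet (Prod.fst ⁻¹' A ∩ S) := (measurable_fst hA).inter hS
  have hfibre : ∀ v, P.map Z (Prod.mk v ⁻¹' (Prod.fst ⁻¹' A ∩ S)) ≤ A.indicator (fun _ => q) v := by
    intro v
    by_cases hv : v ∈ A
    · rw [indicator_of_mem hv]
      exact (measure_mono fun z hz => hz.2).trans (hq v hv)
    · rw [indicator_of_notMem hv, measure_mono_null (fun z hz => hv hz.1) measure_empty]
  calc P ((fun ω => (V ω, Z ω)) ⁻¹' (Prod.fst ⁻¹' A ∩ S))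
      = ∫⁻ v, P.map Z (Prod.mk v ⁻¹' (Prod.fst ⁻¹' A ∩ S)) ∂(P.map V) := by
        rw [← Measure.map_apply_of_aemeasurable (hV.prodMk hZ) hAS,
          hind.map_prod_eq_prod_map_map hV hZ, Measure.prod_apply hAS]
    _ ≤ ∫⁻ v, A.indicator (fun _ => q) v ∂(P.map V) := lintegral_mono hfibre
    _ = q * P (V ⁻¹' A) := by
        rw [lintegral_indicator_const hA, Measure.map_apply_of_aemeasurable hV hA]

-- The hypothesis `hvar` says that the conditional variance of `Y` given `V` is at least `s ^ 2`.
lemma measure_setOf_mem_and_mem_closedBall_le {V : ι → Ω → ℝ} {Y : Ω → ℝ}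
    (h : HasGaussianLaw (fun ω => ((fun i => V i ω), Y ω)) P)
    (hnd : ∀ u : ι → ℝ, Var[fun ω => ∑ j, u j * V j ω; P] = 0 → u = 0) {s : ℝ} (hs : 0 < s)
    (hvar : ∀ a : ι → ℝ, s ^ 2 ≤ Var[fun ω => Y ω - ∑ j, a j * V j ω; P]) {A : Set (ι → ℝ)}
    (hA : MeasurableSet A) (y ε : ℝ) :
    P {ω | (fun i => V i ω) ∈ A ∧ Y ω ∈ closedBall y ε} ≤
      ENNReal.ofReal (ε / s) * P {ω | (fun i => V i ω) ∈ A} := by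
  have := h.isProbabilityMeasure
  obtain ⟨a, hind⟩ := exists_indepFun_sub_sum h hnd
  have hlaw := hasGaussianLaw_prodMk_sub_sum h a
  set Z : Ω → ℝ := fun ω => Y ω - ∑ j, a j * V j ω
  set S : Set ((ι → ℝ) × ℝ) := {p | p.2 + ∑ j, a j * p.1 j ∈ closedBall y ε}
  have hS : MeasurableSet S := measurableSet_closedBall.preimage (by fun_prop)
  have hfibre : ∀ v ∈ A, P.map Z (Prod.mk v ⁻¹' S) ≤ ENNReal.ofReal (ε / s) := by
    intro v _
    have hball : Prod.mk v ⁻¹' S = closedBall (y - ∑ j, a j * v j) ε := by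
      ext z
      simp [S, Real.dist_eq]
    rw [hball, hlaw.snd.map_eq_gaussianReal]
    exact gaussianReal_closedBall_le hs ((hvar a).trans (Real.le_coe_toNNReal _)) _ _ _
  refine le_trans (le_of_eq ?_) (measure_setOf_mem_and_prodMk_mem_le hind hlaw.fst.aemeasurable
    hlaw.snd.aemeasurable hA hS hfibre)
  simp [S, Z]

lemma measure_forall_mem_closedBall_le {s : ℝ} (hs : 0 < s) (ε : ℝ) {n : ℕ} {X : Fin n → Ω → ℝ}
    (hX : HasGaussianLaw (fun ω i => X i ω) P)
    (hvar : ∀ (u : Fin n → ℝ) (i : Fin n), s ^ 2 * u i ^ 2 ≤ Var[fun ω => ∑ j, u j * X j ω; P])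
    (x : Fin n → ℝ) :
    P {ω | ∀ i, X i ω ∈ closedBall (x i) ε} ≤ ENNReal.ofReal (ε / s) ^ n := by
  have := hX.isProbabilityMeasure
  induction n with
  | zero => simp
  | succ n ih =>
    have hlaw : HasGaussianLaw
        (fun ω => ((fun i : Fin n => X i.castSucc ω), X (Fin.last n) ω)) P :=
      hX.map ((ContinuousLinearMap.pi fun i : Fin n =>
        ContinuousLinearMap.proj (R := ℝ) (φ := fun _ : Fin (n + 1) => ℝ) i.castSucc).prod
          (ContinuousLinearMap.proj (Fin.last n)))
    have hvar_init : ∀ (u : Fin n → ℝ) (i : Fin n),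
        s ^ 2 * u i ^ 2 ≤ Var[fun ω => ∑ j, u j * X j.castSucc ω; P] := by
      intro u i
      simpa [Fin.sum_univ_castSucc] using hvar (Fin.snoc u 0) i.castSucc
    have hnd : ∀ u : Fin n → ℝ, Var[fun ω => ∑ j, u j * X j.castSucc ω; P] = 0 → u = 0 :=
      fun u hu => funext fun i => (pow_eq_zero_iff two_ne_zero).mp <| le_antisymm
        (nonpos_of_mul_nonpos_right ((hvar_init u i).trans hu.le) (pow_pos hs 2)) (sq_nonneg _)
    have hvar_last : ∀ a : Fin n → ℝ,
        s ^ 2 ≤ Var[fun ω => X (Fin.last n) ω - ∑ j, a j * X j.castSucc ω; P] := by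
      intro a
      simpa [Fin.sum_univ_castSucc, neg_add_eq_sub] using hvar (Fin.snoc (-a) 1) (Fin.last n)
    have hbox : MeasurableSet {v : Fin n → ℝ | ∀ i, v i ∈ closedBall (x i.castSucc) ε} := by
      simpa only [Set.pi, mem_univ, true_implies] using
        MeasurableSet.univ_pi fun i : Fin n => measurableSet_closedBall (x := x i.castSucc) (ε := ε)
    calc P {ω | ∀ i, X i ω ∈ closedBall (x i) ε}
        = P {ω | (∀ i : Fin n, X i.castSucc ω ∈ closedBall (x i.castSucc) ε) ∧
            X (Fin.last n) ω ∈ closedBall (x (Fin.last n)) ε} := by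
          simp only [Fin.forall_fin_succ']
      _ ≤ ENNReal.ofReal (ε / s) *
            P {ω | ∀ i : Fin n, X i.castSucc ω ∈ closedBall (x i.castSucc) ε} :=
          measure_setOf_mem_and_mem_closedBall_le hlaw hnd hs hvar_last hbox _ ε
      _ ≤ ENNReal.ofReal (ε / s) * ENNReal.ofReal (ε / s) ^ n := by
          gcongr
          exact ih hlaw.fst hvar_init _
      _ = ENNReal.ofReal (ε / s) ^ (n + 1) := (pow_succ' _ _).symm

end GaussianVectors

/-! ### Gaussian processes on path space -/

section GaussianProcess

open ProbabilityTheory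

lemma measurable_eval (t : unitInterval) : Measurable fun ω : PathSpace => ω.1 t :=
  ((continuous_eval_const t).comp continuous_subtype_val).measurable

/-- Strong local nondeterminism of order `H`: the conditional variance of the process at `t i`,
given its values at times at distance at least `r` from `t i` and its vanishing at time `0`, is at
least `c * r ^ (2 * H)`. It is encoded as a lower bound for the quadratic form of the covariance. -/
def IsLocallyNondeterministic (H : ℝ) (K : unitInterval → unitInterval → ℝ) : Prop :=
  ∃ c > 0, ∀ (n : ℕ) (t : Fin n → unitInterval) (u : Fin n → ℝ) (i : Fin n) (r : ℝ), 0 < r →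
    r ≤ t i → (∀ j ≠ i, r ≤ |(t j : ℝ) - t i|) →
      c * r ^ (2 * H) * u i ^ 2 ≤ ∑ j, ∑ k, u j * u k * K (t j) (t k)

/-- The variance of an increment of a process with covariance `K` is at most a multiple of the
`2 * H`-th power of the time step. -/
def HasHolderVariance (H : ℝ) (K : unitInterval → unitInterval → ℝ) : Prop :=
  ∃ C > 0, ∀ s t : unitInterval,
    K s s - K s t - K t s + K t t ≤ C * |(t : ℝ) - s| ^ (2 * H)

/-- The covariance of fractional Brownian motion with Hurst parameter `H` on the unit interval. -/
def fbmCov (H : ℝ) (s t : unitInterval) : ℝ :=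
  ((s : ℝ) ^ (2 * H) + (t : ℝ) ^ (2 * H) - |(t : ℝ) - s| ^ (2 * H)) / 2

lemma isLocallyNondeterministic_fbmCov {H : ℝ} (hH : H ∈ Ioo (0 : ℝ) 1) :
    IsLocallyNondeterministic H (fbmCov H) := by
  have ha : 0 < 2 * H := by linarith [hH.1]
  have ha2 : 2 * H < 2 := by linarith [hH.2]
  have hC := cosConst_pos ha ha2
  have hC₁ := cosConst_pos one_pos one_lt_two
  have hC' : 0 < cosConst (2 - 2 * H) := cosConst_pos (by linarith) (by linarith)
  refine ⟨cosConst 1 ^ 2 / (4 * cosConst (2 - 2 * H) * cosConst (2 * H)), by positivity,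
    fun n t u i r hr hti hsep => ?_⟩
  have hle := mul_rpow_mul_sq_le_sum_sum_fracCov (t := fun j => (t j : ℝ)) u ha ha2 hr
    (hti.trans (le_abs_self _)) hsep
  simpa only [fracCov, fbmCov, abs_of_nonneg (t _).2.1] using hle

lemma hasHolderVariance_fbmCov {H : ℝ} (hH : 0 < H) : HasHolderVariance H (fbmCov H) := by
  refine ⟨1, one_pos, fun s t => le_of_eq ?_⟩
  have h0 : (0 : ℝ) ^ (2 * H) = 0 := Real.zero_rpow (by positivity)
  simp only [fbmCov, sub_self, abs_zero, h0, abs_sub_comm (s : ℝ) t]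
  ring

variable {μ : Measure PathSpace} {K : unitInterval → unitInterval → ℝ} {H : ℝ}

lemma IsGaussianProcess.hasGaussianLaw (h : IsGaussianProcess μ K) {n : ℕ}
    (t : Fin n → unitInterval) : HasGaussianLaw (fun (ω : PathSpace) i => ω.1 (t i)) μ := by
  refine ⟨isGaussian_of_map_eq_gaussianReal fun L =>
    ⟨0, _, Eq.trans ?_ (h.2 n t fun i => L fun j => if i = j then 1 else 0)⟩⟩
  rw [Measure.map_map (by fun_prop) (measurable_pi_lambda _ fun i => measurable_eval (t i))]
  congr 1
  ext ω
  simpa [mul_comm] using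
    L.toLinearMap.pi_apply_eq_sum_univ fun i => ω.1 (t i)

lemma IsGaussianProcess.sum_sum_le_variance (h : IsGaussianProcess μ K) {n : ℕ}
    (t : Fin n → unitInterval) (u : Fin n → ℝ) :
    ∑ i, ∑ j, u i * u j * K (t i) (t j) ≤ Var[fun ω : PathSpace => ∑ i, u i * ω.1 (t i); μ] := by
  have hmeas : Measurable fun ω : PathSpace => ∑ i, u i * ω.1 (t i) :=
    Finset.measurable_sum _ fun i _ => (measurable_eval (t i)).const_mul _
  have hvar := variance_map (X := id) (μ := μ) aemeasurable_id hmeas.aemeasurable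
  rw [h.2 n t u, variance_id_gaussianReal] at hvar
  exact (Real.le_coe_toNNReal _).trans_eq hvar

lemma IsGaussianProcess.map_sub (h : IsGaussianProcess μ K) (s t : unitInterval) :
    μ.map (fun ω : PathSpace => ω.1 t - ω.1 s) =
      gaussianReal 0 (K s s - K s t - K t s + K t t).toNNReal := by
  convert h.2 2 ![s, t] ![-1, 1] using 2
  · ext ω
    simp [neg_add_eq_sub]
  · congr 1
    simp only [Fin.sum_univ_two, Matrix.cons_val_zero, Matrix.cons_val_one]
    ring

lemma IsGaussianProcess.measure_lt_abs_sub_le (h : IsGaussianProcess μ K) {s t : unitInterval}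
    {V : ℝ≥0} (hV : K s s - K s t - K t s + K t t ≤ V) {x : ℝ} (hx : 0 ≤ x) :
    μ {ω | x < |ω.1 t - ω.1 s|} ≤ ENNReal.ofReal (2 * Real.exp (-x ^ 2 / (2 * V))) := by
  refine le_of_eq_of_le ?_
    (gaussianReal_setOf_lt_abs_le (Real.toNNReal_le_iff_le_coe.mpr hV) hx)
  have hmeas : Measurable fun ω : PathSpace => ω.1 t - ω.1 s :=
    (measurable_eval t).sub (measurable_eval s)
  rw [← h.map_sub s t, Measure.map_apply hmeas (measurableSet_lt measurable_const (by fun_prop))]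
  rfl

end GaussianProcess

/-! ### The upper small ball bound -/

lemma coe_gridPt {n j : ℕ} (hj : j ≤ n) : (gridPt n j : ℝ) = j / n := by
  have hle : (j : ℝ) / n ≤ 1 := div_le_one_of_le₀ (by exact_mod_cast hj) n.cast_nonneg
  simp [gridPt, clampI, hle, div_nonneg]

lemma inv_le_abs_gridPt_sub {n j k : ℕ} (hj : j ≤ n) (hk : k ≤ n) (hjk : j ≠ k) :
    (n : ℝ)⁻¹ ≤ |(gridPt n j : ℝ) - gridPt n k| := by
  have hdist : (1 : ℝ) ≤ |(j : ℝ) - k| := by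
    have : (1 : ℤ) ≤ |(j : ℤ) - k| := Int.one_le_abs (sub_ne_zero.mpr (by exact_mod_cast hjk))
    exact_mod_cast this
  rw [coe_gridPt hj, coe_gridPt hk, ← sub_div, abs_div, Nat.abs_cast, ← one_div]
  gcongr

lemma ball_subset_cylinder (ωb : PathSpace) (n : ℕ) (ε : ℝ) : ball ωb ε ⊆ cylinder ωb n ε :=
  fun _ hω _ _ => (ContinuousMap.dist_apply_le_dist _).trans (le_of_lt hω)

lemma cylinder_eq_setOf_forall_fin (ωb : PathSpace) (n : ℕ) (ε : ℝ) :
    cylinder ωb n ε =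
      {ω | ∀ i : Fin n, ω.1 (gridPt n (i + 1)) ∈ closedBall (ωb.1 (gridPt n (i + 1))) ε} := by
  ext ω
  refine ⟨fun h i => h _ (Finset.mem_Icc.mpr ⟨by omega, i.2⟩), fun h j hj => ?_⟩
  obtain ⟨hj₁, hjn⟩ := Finset.mem_Icc.mp hj
  simpa only [Nat.sub_add_cancel hj₁, mem_closedBall, Real.dist_eq] using h ⟨j - 1, by omega⟩

section UpperBound

open ProbabilityTheory

variable {μ : Measure PathSpace} {K : unitInterval → unitInterval → ℝ} {H : ℝ}

lemma IsGaussianProcess.exists_measure_cylinder_le (h : IsGaussianProcess μ K)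
    (hnd : IsLocallyNondeterministic H K) :
    ∃ c > 0, ∀ N : ℕ, 0 < N → ∀ (ωb : PathSpace) (ε : ℝ),
      μ (cylinder ωb N ε) ≤ ENNReal.ofReal (ε * (N : ℝ) ^ H / c) ^ N := by
  obtain ⟨c, hc, hnd⟩ := hnd
  refine ⟨√c, Real.sqrt_pos.mpr hc, fun N hN ωb ε => ?_⟩
  have hN' : (0 : ℝ) < N := by exact_mod_cast hN
  set s := √c * (N : ℝ)⁻¹ ^ H
  have hs : 0 < s := by positivity
  have hs_sq : s ^ 2 = c * (N : ℝ)⁻¹ ^ (2 * H) := by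
    rw [mul_pow, Real.sq_sqrt hc.le, mul_comm 2 H, Real.rpow_mul (by positivity), Real.rpow_two]
  have hs_div : ε / s = ε * (N : ℝ) ^ H / √c := by
    simp only [s, Real.inv_rpow hN'.le]
    field_simp
  let t : Fin N → unitInterval := fun i => gridPt N (i + 1)
  have hvar : ∀ (u : Fin N → ℝ) (i : Fin N),
      s ^ 2 * u i ^ 2 ≤ Var[fun ω : PathSpace => ∑ j, u j * ω.1 (t j); μ] := by
    intro u i
    rw [hs_sq]
    refine (hnd N t u i _ (inv_pos.mpr hN') ?_ fun j hj => ?_).trans (h.sum_sum_le_variance t u)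
    · rw [coe_gridPt i.2, ← one_div]
      gcongr
      simp
    · exact inv_le_abs_gridPt_sub j.2 i.2 (by omega)
  rw [cylinder_eq_setOf_forall_fin, ← hs_div]
  exact measure_forall_mem_closedBall_le hs ε (h.hasGaussianLaw t) hvar fun i => ωb.1 (t i)

-- `N ≈ (c / (e * ε)) ^ H⁻¹` makes the base at most `e⁻¹`.
lemma exists_eventually_exists_pow_le_exp_neg {c : ℝ} (hH : 0 < H) (hc : 0 < c) :
    ∃ C > 0, ∀ᶠ ε in 𝓝[>] (0 : ℝ), ∃ N : ℕ, 0 < N ∧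
      (ε * (N : ℝ) ^ H / c) ^ N ≤ Real.exp (-(C * ε ^ (-H⁻¹))) := by
  set b := c / Real.exp 1
  have hb : 0 < b := by positivity
  refine ⟨b ^ H⁻¹ / 2, by positivity, ?_⟩
  filter_upwards [Ioc_mem_nhdsGT hb] with ε ⟨hε, hεb⟩
  set x := (b / ε) ^ H⁻¹ with hx
  have hx_one : 1 ≤ x := Real.one_le_rpow ((one_le_div hε).mpr hεb) (by positivity)
  have hx_eq : x = b ^ H⁻¹ * ε ^ (-H⁻¹) := by
    rw [hx, Real.div_rpow hb.le hε.le, Real.rpow_neg hε.le, div_eq_mul_inv]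
  have hfloor : 1 ≤ ⌊x⌋₊ := Nat.le_floor (by exact_mod_cast hx_one)
  have hfloor_half : x / 2 ≤ ⌊x⌋₊ := by
    have : (1 : ℝ) ≤ ⌊x⌋₊ := by exact_mod_cast hfloor
    linarith [Nat.lt_floor_add_one x]
  have hbase : ε * (⌊x⌋₊ : ℝ) ^ H / c ≤ Real.exp (-1) := by
    have hpow : (⌊x⌋₊ : ℝ) ^ H ≤ b / ε := by
      calc (⌊x⌋₊ : ℝ) ^ H ≤ x ^ H := by
            gcongr
            exact Nat.floor_le (by positivity)
        _ = b / ε := Real.rpow_inv_rpow (by positivity) hH.ne'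
    calc ε * (⌊x⌋₊ : ℝ) ^ H / c ≤ ε * (b / ε) / c := by gcongr
      _ = Real.exp (-1) := by
        rw [Real.exp_neg]
        simp only [b]
        field_simp
  refine ⟨⌊x⌋₊, hfloor, ?_⟩
  calc (ε * (⌊x⌋₊ : ℝ) ^ H / c) ^ ⌊x⌋₊ ≤ Real.exp (-1) ^ ⌊x⌋₊ := by gcongr
    _ = Real.exp (-⌊x⌋₊) := by rw [← Real.exp_nat_mul, mul_neg_one]
    _ ≤ Real.exp (-(b ^ H⁻¹ / 2 * ε ^ (-H⁻¹))) := by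
      rw [Real.exp_le_exp, neg_le_neg_iff]
      linarith

lemma IsGaussianProcess.exists_measure_ball_le_exp_neg (hH : 0 < H) (h : IsGaussianProcess μ K)
    (hnd : IsLocallyNondeterministic H K) :
    ∃ C > 0, ∀ᶠ ε in 𝓝[>] (0 : ℝ), ∀ ωb : PathSpace,
      (μ (ball ωb ε)).toReal ≤ Real.exp (-(C * ε ^ (-H⁻¹))) := by
  obtain ⟨c, hc, hcyl⟩ := h.exists_measure_cylinder_le hnd
  obtain ⟨C, hC, hexp⟩ := exists_eventually_exists_pow_le_exp_neg hH hc
  refine ⟨C, hC, ?_⟩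
  filter_upwards [hexp, self_mem_nhdsWithin] with ε ⟨N, hN, hle⟩ hε ωb
  have hε0 : (0 : ℝ) < ε := hε
  refine ENNReal.toReal_le_of_le_ofReal (Real.exp_pos _).le ?_
  calc μ (ball ωb ε) ≤ ENNReal.ofReal (ε * (N : ℝ) ^ H / c) ^ N :=
        (measure_mono (ball_subset_cylinder ωb N ε)).trans (hcyl N hN ωb ε)
    _ = ENNReal.ofReal ((ε * (N : ℝ) ^ H / c) ^ N) := (ENNReal.ofReal_pow (by positivity) _).symm
    _ ≤ ENNReal.ofReal (Real.exp (-(C * ε ^ (-H⁻¹)))) := ENNReal.ofReal_le_ofReal hle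

end UpperBound

/-! ### Dyadic regularity of paths -/

/-- The paths whose increments over the dyadic intervals of each level `n ≥ M` are at most
`r ^ n`; for `r = 2 ^ (-α)` this is Hölder continuity of order `α` read off the dyadic grid. -/
def dyadicRegular (r : ℝ) (M : ℕ) : Set PathSpace :=
  {ω | ∀ n ≥ M, ∀ k < 2 ^ n, |ω.1 (gridPt (2 ^ n) (k + 1)) - ω.1 (gridPt (2 ^ n) k)| ≤ r ^ n}

lemma abs_gridPt_succ_sub_le (n k : ℕ) :
    |(gridPt n (k + 1) : ℝ) - gridPt n k| ≤ (n : ℝ)⁻¹ := by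
  calc |(gridPt n (k + 1) : ℝ) - gridPt n k| ≤ |((k + 1 : ℕ) : ℝ) / n - (k : ℝ) / n| := by
        refine (abs_min_sub_min_le_max _ _ _ _).trans (max_le ?_ (by simp))
        exact (abs_max_sub_max_le_max _ _ _ _).trans (max_le le_rfl (by simp))
    _ = (n : ℝ)⁻¹ := by
        rw [← sub_div, Nat.cast_add_one, add_sub_cancel_left, one_div,
          abs_of_nonneg (by positivity)]

lemma summable_pow_mul_exp_neg_mul_pow {a b c : ℝ} (ha : 0 < a) (hb : 1 < b) (hc : 0 < c) :
    Summable fun n : ℕ => a ^ n * Real.exp (-(c * b ^ n)) := by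
  have hlim : Tendsto (fun n : ℕ => a * Real.exp (-(c * (b - 1) * b ^ n))) atTop (𝓝 0) := by
    have htop := (tendsto_pow_atTop_atTop_of_one_lt hb).const_mul_atTop
      (mul_pos hc (sub_pos.mpr hb))
    simpa using (Real.tendsto_exp_neg_atTop_nhds_zero.comp htop).const_mul a
  refine summable_of_ratio_test_tendsto_lt_one one_pos
    (.of_forall fun n => (mul_pos (pow_pos ha n) (Real.exp_pos _)).ne') (hlim.congr fun n => ?_)
  rw [Real.norm_of_nonneg (by positivity), Real.norm_of_nonneg (by positivity),
    mul_div_mul_comm, ← Real.exp_sub, pow_succ, mul_div_cancel_left₀ _ (pow_pos ha n).ne']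
  ring_nf

section DyadicRegularity

variable {μ : Measure PathSpace} {K : unitInterval → unitInterval → ℝ} {H : ℝ}

lemma ae_exists_mem_dyadicRegular {r : ℝ}
    (h : ∑' n : ℕ, ∑ k ∈ Finset.range (2 ^ n),
      μ {ω | r ^ n < |ω.1 (gridPt (2 ^ n) (k + 1)) - ω.1 (gridPt (2 ^ n) k)|} ≠ ∞) :
    ∀ᵐ ω ∂μ, ∃ M, ω ∈ dyadicRegular r M := by
  let B : ℕ → Set PathSpace := fun n => ⋃ k ∈ Finset.range (2 ^ n),
    {ω | r ^ n < |ω.1 (gridPt (2 ^ n) (k + 1)) - ω.1 (gridPt (2 ^ n) k)|}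
  have hB : ∑' n, μ (B n) ≠ ∞ :=
    ne_top_of_le_ne_top h (ENNReal.tsum_le_tsum fun n => measure_biUnion_finset_le _ _)
  filter_upwards [ae_eventually_notMem hB] with ω hω
  obtain ⟨M, hM⟩ := eventually_atTop.mp hω
  refine ⟨M, fun n hn k hk => not_lt.mp fun hlt => hM n hn ?_⟩
  exact mem_biUnion (Finset.mem_coe.mpr (Finset.mem_range.mpr hk)) hlt

lemma IsGaussianProcess.measure_lt_abs_gridPt_succ_sub_le (h : IsGaussianProcess μ K) (hH : 0 < H)
    {C : ℝ} (hC : 0 < C)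
    (hK : ∀ s t : unitInterval, K s s - K s t - K t s + K t t ≤ C * |(t : ℝ) - s| ^ (2 * H))
    {x : ℝ} (hx : 0 ≤ x) (n k : ℕ) :
    μ {ω | x < |ω.1 (gridPt n (k + 1)) - ω.1 (gridPt n k)|} ≤
      ENNReal.ofReal (2 * Real.exp (-(1 / (2 * C) * (x ^ 2 * (n : ℝ) ^ (2 * H))))) := by
  let V : ℝ≥0 := ⟨C * (n : ℝ)⁻¹ ^ (2 * H), by positivity⟩
  have hV : K (gridPt n k) (gridPt n k) - K (gridPt n k) (gridPt n (k + 1)) -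
      K (gridPt n (k + 1)) (gridPt n k) + K (gridPt n (k + 1)) (gridPt n (k + 1)) ≤ V := by
    refine (hK _ _).trans (mul_le_mul_of_nonneg_left ?_ hC.le)
    gcongr
    exact abs_gridPt_succ_sub_le n k
  refine (h.measure_lt_abs_sub_le hV hx).trans_eq ?_
  rw [show (V : ℝ) = C * (n : ℝ)⁻¹ ^ (2 * H) from rfl, Real.inv_rpow n.cast_nonneg, neg_div,
    ← mul_assoc 2, ← div_eq_mul_inv, div_div_eq_mul_div, div_eq_inv_mul, one_div]

lemma IsGaussianProcess.ae_exists_mem_dyadicRegular (h : IsGaussianProcess μ K)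
    (hinc : HasHolderVariance H K) {α : ℝ} (hα : α ∈ Ioo 0 H) :
    ∀ᵐ ω ∂μ, ∃ M, ω ∈ dyadicRegular (2 ^ (-α)) M := by
  obtain ⟨C, hC, hK⟩ := hinc
  have hr : (0 : ℝ) < 2 ^ (-α) := by positivity
  set b : ℝ := 2 ^ (2 * (H - α)) with hb
  have hb_one : 1 < b := Real.one_lt_rpow one_lt_two (by linarith [hα.2])
  have hpow : ∀ n : ℕ, (((2 : ℝ) ^ (-α)) ^ n) ^ 2 * ((2 ^ n : ℕ) : ℝ) ^ (2 * H) = b ^ n := by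
    intro n
    rw [Nat.cast_pow, Nat.cast_ofNat, ← Real.rpow_pow_comm two_pos.le, pow_right_comm, ← mul_pow,
      ← Real.rpow_mul_natCast two_pos.le, ← Real.rpow_add two_pos, hb]
    ring_nf
  refine Multifractal.ae_exists_mem_dyadicRegular (ne_top_of_le_ne_top
    ((summable_pow_mul_exp_neg_mul_pow two_pos hb_one (c := 1 / (2 * C))
      (by positivity)).mul_left 2).tsum_ofReal_ne_top (ENNReal.tsum_le_tsum fun n => ?_))
  calc ∑ k ∈ Finset.range (2 ^ n),
        μ {ω | (2 ^ (-α)) ^ n < |ω.1 (gridPt (2 ^ n) (k + 1)) - ω.1 (gridPt (2 ^ n) k)|}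
      ≤ ∑ _k ∈ Finset.range (2 ^ n),
          ENNReal.ofReal (2 * Real.exp (-(1 / (2 * C) * b ^ n))) := by
        refine Finset.sum_le_sum fun k _ => ?_
        rw [← hpow]
        exact h.measure_lt_abs_gridPt_succ_sub_le (hα.1.trans hα.2) hC hK (pow_pos hr n).le _ k
    _ = ENNReal.ofReal (2 * (2 ^ n * Real.exp (-(1 / (2 * C) * b ^ n)))) := by
        rw [Finset.sum_const, Finset.card_range, ← ENNReal.ofReal_nsmul, nsmul_eq_mul]
        push_cast
        ring_nf

end DyadicRegularity

/-! ### Coding dyadically regular paths -/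

lemma gridPt_zero (n : ℕ) : gridPt n 0 = 0 :=
  Subtype.ext (by simp [gridPt, clampI])

lemma gridPt_two_pow_succ (n k : ℕ) : gridPt (2 ^ (n + 1)) (2 * k) = gridPt (2 ^ n) k := by
  unfold gridPt
  congr 1
  push_cast
  rw [pow_succ]
  field_simp

/-- The largest dyadic point of level `n` that does not exceed `t`. -/
def dyadicFloor (n : ℕ) (t : unitInterval) : unitInterval := gridPt (2 ^ n) ⌊2 ^ n * (t : ℝ)⌋₊

lemma floor_two_pow_mul_le (n : ℕ) (t : unitInterval) : ⌊2 ^ n * (t : ℝ)⌋₊ ≤ 2 ^ n := by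
  refine Nat.floor_le_of_le ?_
  push_cast
  exact mul_le_of_le_one_right (by positivity) t.2.2

lemma tendsto_dyadicFloor (t : unitInterval) :
    Tendsto (fun n => dyadicFloor n t) atTop (𝓝 t) := by
  have hfloor : Tendsto (fun n : ℕ => (⌊2 ^ n * (t : ℝ)⌋₊ : ℝ) / 2 ^ n) atTop (𝓝 t) := by
    simpa only [Function.comp_def, mul_comm] using (tendsto_nat_floor_mul_div_atTop t.2.1).comp
      (tendsto_pow_atTop_atTop_of_one_lt (one_lt_two (α := ℝ)))
  refine tendsto_subtype_rng.mpr (hfloor.congr fun n => ?_)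
  rw [dyadicFloor, coe_gridPt (floor_two_pow_mul_le n t)]
  simp

lemma dyadicFloor_succ (n : ℕ) (t : unitInterval) :
    dyadicFloor (n + 1) t = dyadicFloor n t ∨
      ∃ k < 2 ^ (n + 1), dyadicFloor n t = gridPt (2 ^ (n + 1)) k ∧
        dyadicFloor (n + 1) t = gridPt (2 ^ (n + 1)) (k + 1) := by
  have hhalf : ⌊2 ^ (n + 1) * (t : ℝ)⌋₊ / 2 = ⌊2 ^ n * (t : ℝ)⌋₊ := by
    rw [← Nat.floor_div_ofNat, pow_succ, mul_right_comm, mul_div_cancel_right₀ _ two_ne_zero]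
  have hle := floor_two_pow_mul_le (n + 1) t
  unfold dyadicFloor
  rw [← gridPt_two_pow_succ n, ← hhalf]
  rcases Nat.mod_two_eq_zero_or_one ⌊2 ^ (n + 1) * (t : ℝ)⌋₊ with heven | hodd
  · left
    congr 1
    omega
  · refine Or.inr ⟨_, ?_, rfl, ?_⟩
    · omega
    · congr 1
      omega

section Coding

variable {r : ℝ} {M n : ℕ}

lemma dist_apply_dyadicFloor_succ_le (hr : 0 < r) (hr1 : r < 1) (hn : M ≤ n) {ω : PathSpace}
    (hω : ω ∈ dyadicRegular r M) (t : unitInterval) :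
    dist (ω.1 (dyadicFloor n t)) (ω.1 (dyadicFloor (n + 1) t)) ≤ r ^ n := by
  rcases dyadicFloor_succ n t with heq | ⟨k, hk, heq, heq'⟩
  · rw [heq, dist_self]
    positivity
  · rw [heq, heq', dist_comm, Real.dist_eq]
    exact (hω (n + 1) (by omega) k hk).trans (pow_le_pow_of_le_one hr.le hr1.le n.le_succ)

lemma dist_apply_dyadicFloor_le (hr : 0 < r) (hr1 : r < 1) (hn : M ≤ n) {ω : PathSpace}
    (hω : ω ∈ dyadicRegular r M) (t : unitInterval) :
    dist (ω.1 (dyadicFloor n t)) (ω.1 t) ≤ r ^ n / (1 - r) := by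
  have hlim : Tendsto (fun j => ω.1 (dyadicFloor (j + n) t)) atTop (𝓝 (ω.1 t)) :=
    ((ω.1.continuous.tendsto t).comp (tendsto_dyadicFloor t)).comp (tendsto_add_atTop_nat n)
  have hstep : ∀ j, dist (ω.1 (dyadicFloor (j + n) t)) (ω.1 (dyadicFloor (j + 1 + n) t)) ≤
      r ^ n * r ^ j := by
    intro j
    rw [← pow_add, add_comm n, add_right_comm]
    exact dist_apply_dyadicFloor_succ_le hr hr1 (hn.trans (Nat.le_add_left n j)) hω t
  simpa only [zero_add] using dist_le_of_le_geometric_of_tendsto₀ r (r ^ n) hr1 hstep hlim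

/-- The increments along the level-`n` dyadic grid of the path rounded down to multiples
of `δ`. -/
def dyadicCode (δ : ℝ) (n : ℕ) (ω : PathSpace) (k : Fin (2 ^ n)) : ℤ :=
  ⌊ω.1 (gridPt (2 ^ n) (k + 1)) / δ⌋ - ⌊ω.1 (gridPt (2 ^ n) k) / δ⌋

lemma floor_div_le_floor_div_add_one {δ x y : ℝ} (hδ : 0 < δ) (hxy : x - y ≤ δ) :
    ⌊x / δ⌋ ≤ ⌊y / δ⌋ + 1 := by
  rw [← Int.floor_add_one]
  refine Int.floor_le_floor ?_
  rw [← sub_le_iff_le_add', ← sub_div]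
  exact (div_le_one hδ).mpr hxy

lemma dyadicCode_mem_piFinset (hr : 0 < r) (hn : M ≤ n) {ω : PathSpace}
    (hω : ω ∈ dyadicRegular r M) :
    dyadicCode (r ^ n) n ω ∈ Fintype.piFinset fun _ : Fin (2 ^ n) => Finset.Icc (-1 : ℤ) 1 := by
  refine Fintype.mem_piFinset.mpr fun k => Finset.mem_Icc.mpr ?_
  obtain ⟨hlower, hupper⟩ := abs_le.mp (hω n hn k k.2)
  have hup := floor_div_le_floor_div_add_one (pow_pos hr n) hupper
  have hdown := floor_div_le_floor_div_add_one (x := ω.1 (gridPt (2 ^ n) k))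
    (y := ω.1 (gridPt (2 ^ n) (k + 1))) (pow_pos hr n) (by linarith)
  unfold dyadicCode
  omega

lemma floor_eq_of_dyadicCode_eq {δ : ℝ} {ω ω' : PathSpace}
    (h : dyadicCode δ n ω = dyadicCode δ n ω') {k : ℕ} (hk : k ≤ 2 ^ n) :
    ⌊ω.1 (gridPt (2 ^ n) k) / δ⌋ = ⌊ω'.1 (gridPt (2 ^ n) k) / δ⌋ := by
  induction k with
  | zero => rw [gridPt_zero, ω.2, ω'.2]
  | succ k ih =>
    have hcode := congrFun h ⟨k, hk⟩
    have hk' := ih (by omega)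
    simp only [dyadicCode] at hcode
    omega

lemma dist_lt_of_dyadicCode_eq (hr : 0 < r) (hr1 : r < 1) (hn : M ≤ n)
    {ω ω' : PathSpace} (hω : ω ∈ dyadicRegular r M) (hω' : ω' ∈ dyadicRegular r M)
    (h : dyadicCode (r ^ n) n ω = dyadicCode (r ^ n) n ω') :
    dist ω ω' < (2 + 2 / (1 - r)) * r ^ n := by
  have hrn : 0 < r ^ n := pow_pos hr n
  have : 0 < 1 - r := sub_pos.mpr hr1
  have hgrid : ∀ t, dist (ω.1 (dyadicFloor n t)) (ω'.1 (dyadicFloor n t)) ≤ r ^ n := by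
    intro t
    have hfloor := Int.abs_sub_lt_one_of_floor_eq_floor
      (floor_eq_of_dyadicCode_eq h (floor_two_pow_mul_le n t))
    rw [← sub_div, abs_div, abs_of_pos hrn, div_lt_one hrn] at hfloor
    exact hfloor.le
  have hle : dist ω ω' ≤ r ^ n / (1 - r) + r ^ n + r ^ n / (1 - r) := by
    refine (ContinuousMap.dist_le (by positivity)).mpr fun t => ?_
    refine (dist_triangle4 _ (ω.1 (dyadicFloor n t)) (ω'.1 (dyadicFloor n t)) _).trans ?_
    gcongr
    · exact dist_comm (ω.1 t) _ ▸ dist_apply_dyadicFloor_le hr hr1 hn hω t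
    · exact hgrid t
    · exact dist_apply_dyadicFloor_le hr hr1 hn hω' t
  calc dist ω ω' ≤ (1 + 2 / (1 - r)) * r ^ n := hle.trans_eq (by ring)
    _ < (2 + 2 / (1 - r)) * r ^ n := by
        gcongr
        exact one_lt_two

end Coding

/-! ### Lower bound for the mass of small balls -/

/-- At most `#S` codes are available, and a ball of radius `ρ` around a point of `E` contains all
points of `E` with the same code. -/
lemma measure_setOf_measure_ball_lt_le {X ι : Type*} [PseudoMetricSpace X] [MeasurableSpace X]
    (ν : Measure X) {E : Set X} {S : Finset ι} {f : X → ι} (hf : ∀ x ∈ E, f x ∈ S) {ρ : ℝ}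
    (hρ : ∀ x ∈ E, ∀ y ∈ E, f x = f y → dist x y < ρ) (θ : ℝ≥0∞) :
    ν {x ∈ E | ν (ball x ρ) < θ} ≤ S.card * θ := by
  have hcover : {x ∈ E | ν (ball x ρ) < θ} ⊆
      ⋃ c ∈ S, {x ∈ E | ν (ball x ρ) < θ ∧ f x = c} :=
    fun x hx => mem_biUnion (Finset.mem_coe.mpr (hf x hx.1)) ⟨hx.1, hx.2, rfl⟩
  refine (measure_mono hcover).trans ((measure_biUnion_finset_le _ _).trans ?_)
  rw [← nsmul_eq_mul]
  refine Finset.sum_le_card_nsmul _ _ _ fun c _ => ?_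
  rcases {x ∈ E | ν (ball x ρ) < θ ∧ f x = c}.eq_empty_or_nonempty with
    hempty | ⟨y, hyE, hyθ, hyc⟩
  · rw [hempty, measure_empty]
    exact zero_le
  · exact (measure_mono fun x hx => hρ x hx.1 y hyE (hx.2.2.trans hyc.symm)).trans hyθ.le

lemma exp_neg_le_inv_two_pow_mul (n : ℕ) :
    ENNReal.ofReal (Real.exp (-(3 * 2 ^ n))) ≤ (2 ^ n * 3 ^ 2 ^ n : ℝ≥0∞)⁻¹ := by
  have htwo : (2 : ℝ) ^ n ≤ Real.exp (2 ^ n) := by linarith [Real.add_one_le_exp ((2 : ℝ) ^ n)]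
  have hthree : (3 : ℝ) ^ 2 ^ n ≤ Real.exp (2 * 2 ^ n) := by
    have hbase : (3 : ℝ) ≤ Real.exp 2 := by linarith [Real.add_one_le_exp (2 : ℝ)]
    calc (3 : ℝ) ^ 2 ^ n ≤ Real.exp 2 ^ 2 ^ n := by gcongr
      _ = Real.exp (2 * 2 ^ n) := by
          rw [← Real.exp_nat_mul, Nat.cast_pow, Nat.cast_ofNat, mul_comm]
  have hmul : (2 : ℝ) ^ n * 3 ^ 2 ^ n ≤ Real.exp (3 * 2 ^ n) := by
    calc (2 : ℝ) ^ n * 3 ^ 2 ^ n ≤ Real.exp (2 ^ n) * Real.exp (2 * 2 ^ n) := by gcongr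
      _ = Real.exp (3 * 2 ^ n) := by
          rw [← Real.exp_add]
          ring_nf
  rw [Real.exp_neg, ENNReal.ofReal_inv_of_pos (Real.exp_pos _), ENNReal.inv_le_inv]
  simpa [ENNReal.ofReal_mul, ENNReal.ofReal_pow] using ENNReal.ofReal_le_ofReal hmul

section LowerBound

variable {μ : Measure PathSpace} {r : ℝ}

variable (μ) in
lemma measure_setOf_measure_ball_lt_le_inv_two_pow (hr : 0 < r) (hr1 : r < 1) {M n : ℕ}
    (hn : M ≤ n) :
    μ {ω ∈ dyadicRegular r M |
      μ (ball ω ((2 + 2 / (1 - r)) * r ^ n)) < (2 ^ n * 3 ^ 2 ^ n : ℝ≥0∞)⁻¹} ≤ 2⁻¹ ^ n := by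
  refine (measure_setOf_measure_ball_lt_le μ (fun ω hω => dyadicCode_mem_piFinset hr hn hω)
    (fun ω hω ω' hω' => dist_lt_of_dyadicCode_eq hr hr1 hn hω hω') _).trans_eq ?_
  rw [Fintype.card_piFinset_const, Int.card_Icc,
    show (1 + 1 - -1 : ℤ).toNat = 3 from rfl, ENNReal.mul_inv (by simp) (by simp),
    ← ENNReal.inv_pow, Nat.cast_pow, Nat.cast_ofNat, mul_left_comm,
    ENNReal.mul_inv_cancel (by simp) (by simp), mul_one]

lemma ae_eventually_le_measure_ball (hr : 0 < r) (hr1 : r < 1)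
    (hreg : ∀ᵐ ω ∂μ, ∃ M, ω ∈ dyadicRegular r M) :
    ∀ᵐ ω ∂μ, ∀ᶠ n : ℕ in atTop,
      ENNReal.ofReal (Real.exp (-(3 * 2 ^ n))) ≤ μ (ball ω ((2 + 2 / (1 - r)) * r ^ n)) := by
  let B : ℕ → ℕ → Set PathSpace := fun M n => {ω ∈ dyadicRegular r M |
    μ (ball ω ((2 + 2 / (1 - r)) * r ^ n)) < (2 ^ n * 3 ^ 2 ^ n : ℝ≥0∞)⁻¹}
  have hB : ∀ M, ∑' n, μ (B M (n + M)) ≠ ∞ := by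
    refine fun M => ne_top_of_le_ne_top (b := ∑' n : ℕ, (2⁻¹ : ℝ≥0∞) ^ n) ?_ ?_
    · rw [ENNReal.tsum_geometric]
      simp
    · refine ENNReal.tsum_le_tsum fun n => ?_
      refine (measure_setOf_measure_ball_lt_le_inv_two_pow μ hr hr1 (Nat.le_add_left M n)).trans ?_
      exact pow_le_pow_of_le_one zero_le (by simp) (Nat.le_add_right n M)
  filter_upwards [hreg, ae_all_iff.mpr fun M => ae_eventually_notMem (hB M)] with ω ⟨M, hω⟩ hnotMem
  rw [← map_add_atTop_eq_nat M, eventually_map]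
  filter_upwards [hnotMem M] with n hn
  exact (exp_neg_le_inv_two_pow_mul _).trans (not_lt.mp fun hlt => hn ⟨hω, hlt⟩)

/-- Every small `ε` lies between two consecutive radii `D * 2 ^ (-α * n)`, and passing from one to
the next doubles the exponent. -/
lemma eventually_exp_neg_le_of_eventually_dyadic {f : ℝ → ℝ} (hf : Monotone f) {A D α : ℝ}
    (hA : 0 ≤ A) (hD : 0 < D) (hα : 0 < α)
    (h : ∀ᶠ n : ℕ in atTop, Real.exp (-(A * 2 ^ n)) ≤ f (D * (2 ^ (-α)) ^ n)) :
    ∀ᶠ ε in 𝓝[>] (0 : ℝ), Real.exp (-(2 * A * D ^ α⁻¹ * ε ^ (-α⁻¹))) ≤ f ε := by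
  obtain ⟨N, hN⟩ := eventually_atTop.mp h
  have hbound : 0 < D / (2 ^ N) ^ α := by positivity
  filter_upwards [Ioo_mem_nhdsGT hbound] with ε ⟨hε, hεN⟩
  have hlarge : (2 : ℝ) ^ N ≤ (D / ε) ^ α⁻¹ := by
    rw [Real.le_rpow_inv_iff_of_pos (by positivity) (by positivity) hα]
    exact ((lt_div_comm₀ hε (by positivity)).mp hεN).le
  obtain ⟨m, hm, hm'⟩ := exists_nat_pow_near ((one_le_pow₀ one_le_two).trans hlarge) one_lt_two
  have hNm : N ≤ m + 1 := ((pow_lt_pow_iff_right₀ one_lt_two).mp (hlarge.trans_lt hm')).le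
  have hradius : D * (2 ^ (-α)) ^ (m + 1) ≤ ε := by
    have hdiv : D / ε ≤ ((2 : ℝ) ^ (m + 1)) ^ α :=
      (Real.rpow_inv_le_iff_of_pos (by positivity) (by positivity) hα).mp hm'.le
    rw [Real.rpow_neg two_pos.le, inv_pow, Real.rpow_pow_comm two_pos.le, ← div_eq_mul_inv]
    exact (div_le_comm₀ hε (by positivity)).mp hdiv
  have hexp : A * 2 ^ (m + 1) ≤ 2 * A * D ^ α⁻¹ * ε ^ (-α⁻¹) := by
    calc A * 2 ^ (m + 1) = 2 * A * 2 ^ m := by ring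
      _ ≤ 2 * A * (D / ε) ^ α⁻¹ := by gcongr
      _ = 2 * A * D ^ α⁻¹ * ε ^ (-α⁻¹) := by
          rw [Real.div_rpow hD.le hε.le, Real.rpow_neg hε.le]
          ring
  calc Real.exp (-(2 * A * D ^ α⁻¹ * ε ^ (-α⁻¹))) ≤ Real.exp (-(A * 2 ^ (m + 1))) := by gcongr
    _ ≤ f (D * (2 ^ (-α)) ^ (m + 1)) := hN _ hNm
    _ ≤ f ε := hf hradius

lemma ae_eventually_exp_neg_le_measure_ball [IsFiniteMeasure μ] {α : ℝ} (hα : 0 < α)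
    (hreg : ∀ᵐ ω ∂μ, ∃ M, ω ∈ dyadicRegular (2 ^ (-α)) M) :
    ∃ C > 0, ∀ᵐ ω ∂μ, ∀ᶠ ε in 𝓝[>] (0 : ℝ),
      Real.exp (-(C * ε ^ (-α⁻¹))) ≤ (μ (ball ω ε)).toReal := by
  have hr : (0 : ℝ) < 2 ^ (-α) := by positivity
  have hr1 : (2 : ℝ) ^ (-α) < 1 := Real.rpow_lt_one_of_one_lt_of_neg one_lt_two (neg_lt_zero.mpr hα)
  have hD : 0 < 2 + 2 / (1 - (2 : ℝ) ^ (-α)) := by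
    have := sub_pos.mpr hr1
    positivity
  refine ⟨2 * 3 * (2 + 2 / (1 - (2 : ℝ) ^ (-α))) ^ α⁻¹, by positivity, ?_⟩
  filter_upwards [ae_eventually_le_measure_ball hr hr1 hreg] with ω hω
  have hmono : Monotone fun ε => (μ (ball ω ε)).toReal := fun _ _ hle =>
    ENNReal.toReal_mono (measure_ne_top _ _) (measure_mono (ball_subset_ball hle))
  refine eventually_exp_neg_le_of_eventually_dyadic hmono three_pos.le hD hα ?_
  filter_upwards [hω] with n hn
  exact (ENNReal.ofReal_le_iff_le_toReal (measure_ne_top _ _)).mp hn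

end LowerBound

/-! ### Local orders -/

lemma tendsto_log_mul_rpow_neg_div_neg_log {C : ℝ} (hC : 0 < C) (a : ℝ) :
    Tendsto (fun ε => Real.log (C * ε ^ (-a)) / (-Real.log ε)) (𝓝[>] 0) (𝓝 a) := by
  have hlog : Tendsto (fun ε : ℝ => -Real.log ε) (𝓝[>] 0) atTop :=
    tendsto_neg_atBot_atTop.comp Real.tendsto_log_nhdsGT_zero
  have hlim : Tendsto (fun ε => a + Real.log C / (-Real.log ε)) (𝓝[>] 0) (𝓝 a) := by
    simpa only [add_zero] using (hlog.const_div_atTop (Real.log C)).const_add a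
  refine hlim.congr' ?_
  filter_upwards [hlog.eventually_ne_atTop 0, self_mem_nhdsWithin] with ε hlog_ne hε
  rw [mem_Ioi] at hε
  rw [Real.log_mul hC.ne' (by positivity), Real.log_rpow hε, neg_mul_comm, add_div,
    mul_div_cancel_right₀ _ hlog_ne, add_comm]

section LocalOrder

variable {μ : Measure PathSpace} {a C H : ℝ} {ω : PathSpace}

lemma le_lowerLocOrd [IsFiniteMeasure μ] (hC : 0 < C) (hω : ω ∈ μ.support)
    (h : ∀ᶠ ε in 𝓝[>] (0 : ℝ), (μ (ball ω ε)).toReal ≤ Real.exp (-(C * ε ^ (-a)))) :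
    (a : EReal) ≤ lowerLocOrd μ ω := by
  rw [← ((continuous_coe_real_ereal.tendsto a).comp
    (tendsto_log_mul_rpow_neg_div_neg_log hC a)).liminf_eq]
  refine liminf_le_liminf ?_
  filter_upwards [h, Ioo_mem_nhdsGT one_pos] with ε hle ⟨hε, hε1⟩
  have hball : 0 < (μ (ball ω ε)).toReal := ENNReal.toReal_pos
    ((Measure.mem_support_iff_forall ω).mp hω _ (ball_mem_nhds ω hε)).ne' (measure_ne_top _ _)
  have hlog : 0 ≤ -Real.log ε := neg_nonneg.mpr (Real.log_neg hε hε1).le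
  have hneg : C * ε ^ (-a) ≤ -Real.log (μ (ball ω ε)).toReal :=
    le_neg.mp ((Real.log_le_iff_le_exp hball).mpr hle)
  have hpos : 0 < C * ε ^ (-a) := by positivity
  exact EReal.coe_le_coe_iff.mpr
    (div_le_div_of_nonneg_right (Real.log_le_log hpos hneg) hlog)

lemma upperLocOrd_le [IsProbabilityMeasure μ] (ha : 0 < a) (hC : 0 < C)
    (h : ∀ᶠ ε in 𝓝[>] (0 : ℝ), Real.exp (-(C * ε ^ (-a))) ≤ (μ (ball ω ε)).toReal) :
    upperLocOrd μ ω ≤ (a : EReal) := by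
  rw [← ((continuous_coe_real_ereal.tendsto a).comp
    (tendsto_log_mul_rpow_neg_div_neg_log hC a)).limsup_eq]
  refine limsup_le_limsup ?_
  have hone : ∀ᶠ ε in 𝓝[>] (0 : ℝ), 1 ≤ C * ε ^ (-a) :=
    ((tendsto_rpow_neg_nhdsGT_zero (neg_lt_zero.mpr ha)).const_mul_atTop hC).eventually_ge_atTop 1
  filter_upwards [h, hone, Ioo_mem_nhdsGT one_pos] with ε hle hone ⟨hε, hε1⟩
  have hball : 0 < (μ (ball ω ε)).toReal := (Real.exp_pos _).trans_le hle
  have hneg : -Real.log (μ (ball ω ε)).toReal ≤ C * ε ^ (-a) :=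
    neg_le.mp ((Real.le_log_iff_exp_le hball).mpr hle)
  refine EReal.coe_le_coe_iff.mpr (div_le_div_of_nonneg_right ?_
    (neg_nonneg.mpr (Real.log_neg hε hε1).le))
  -- A ball of full mass contributes the junk value `log 0 = 0`.
  rcases (neg_nonneg.mpr (Real.log_nonpos hball.le measureReal_le_one)).eq_or_lt with hzero | hpos
  · rw [← hzero, Real.log_zero]
    exact Real.log_nonneg hone
  · exact Real.log_le_log hpos hneg

lemma ae_upperLocOrd_le [IsProbabilityMeasure μ] (hH : 0 < H)
    (hreg : ∀ α ∈ Ioo 0 H, ∀ᵐ ω ∂μ, ∃ M, ω ∈ dyadicRegular (2 ^ (-α)) M) :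
    ∀ᵐ ω ∂μ, upperLocOrd μ ω ≤ ((H⁻¹ : ℝ) : EReal) := by
  obtain ⟨α, -, hα, hlim⟩ := exists_seq_strictMono_tendsto' hH
  have hlim_inv : Tendsto (fun n => (((α n)⁻¹ : ℝ) : EReal)) atTop (𝓝 ((H⁻¹ : ℝ) : EReal)) :=
    (continuous_coe_real_ereal.tendsto _).comp (hlim.inv₀ hH.ne')
  have hle : ∀ n, ∀ᵐ ω ∂μ, upperLocOrd μ ω ≤ (((α n)⁻¹ : ℝ) : EReal) := by
    intro n
    obtain ⟨C, hC, hball⟩ := ae_eventually_exp_neg_le_measure_ball (hα n).1 (hreg _ (hα n))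
    filter_upwards [hball] with ω hω
    exact upperLocOrd_le (inv_pos.mpr (hα n).1) hC hω
  filter_upwards [ae_all_iff.mpr hle] with ω hω
  exact ge_of_tendsto' hlim_inv hω

theorem fbm_local_order_general {K : unitInterval → unitInterval → ℝ} (hH : 0 < H)
    (h : IsGaussianProcess μ K) (hnd : IsLocallyNondeterministic H K)
    (hinc : HasHolderVariance H K) :
    ∀ᵐ ω ∂μ, lowerLocOrd μ ω = ((H⁻¹ : ℝ) : EReal) ∧
      upperLocOrd μ ω = ((H⁻¹ : ℝ) : EReal) := by
  have := h.1
  obtain ⟨C, hC, hsmall⟩ := h.exists_measure_ball_le_exp_neg hH hnd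
  have hreg := fun α hα => h.ae_exists_mem_dyadicRegular hinc (α := α) hα
  filter_upwards [Measure.support_mem_ae, ae_upperLocOrd_le hH hreg] with ω hω hupper
  have hlower := le_lowerLocOrd hC hω (hsmall.mono fun ε hε => hε ω)
  have hle : lowerLocOrd μ ω ≤ upperLocOrd μ ω := liminf_le_limsup
  exact ⟨(hle.trans hupper).antisymm hlower, hupper.antisymm (hlower.trans hle)⟩

end LocalOrder

/-- For `W^H`-almost every path `ω̄`, the local order of `W^H` at `ω̄` exists and
equals `1/H`. -/
theorem fbm_local_order (H : ℝ) (hH : H ∈ Set.Ioo (0:ℝ) 1)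
    (WH : Measure PathSpace) (hWH : IsFBM H WH) :
    ∀ᵐ ωb ∂WH, lowerLocOrd WH ωb = ((H⁻¹ : ℝ) : EReal) ∧
      upperLocOrd WH ωb = ((H⁻¹ : ℝ) : EReal) :=
  fbm_local_order_general hH.1 (K := fbmCov H) hWH (isLocallyNondeterministic_fbmCov hH)
    (hasHolderVariance_fbmCov hH.1)

end Multifractal
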